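/- arXiv:math/0511650 — 3 statements merged into one kernel-verified Lean document; each statement's English description precedes it below -/
import Mathlib

section
/- Every root r of L with ht(r) ≤ 1 is a unit multiple of one of the 14 roots of the diagram D; in particular the 14 roots of D are, up to unit multiples, the only roots of height 1, and all other roots of L have height strictly greater than 1. -/
/- Formalization over the ring ℋ of Hurwitz integers inside the real quaternions. -/

noncomputable section
open Quaternion Finset

/-- The real quaternions ℍ. -/
abbrev Quat := Quaternion ℝ

/-- The quaternion `i`. -/
def qi : Quat := ⟨0, 1, 0, 0⟩
/-- The quaternion `j`. -/
def qj : Quat := ⟨0, 0, 1, 0⟩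
/-- The quaternion `k`. -/
def qk : Quat := ⟨0, 0, 0, 1⟩
/-- `p = 1 - i`. -/
def qp : Quat := 1 - qi

/-- A quaternion is a Hurwitz integer if it is `(a+bi+cj+dk)/2` with
`a,b,c,d` integers which are all congruent mod `2`. -/
def IsHurwitz (q : Quat) : Prop :=
  ∃ a b c d : ℤ, a % 2 = b % 2 ∧ b % 2 = c % 2 ∧ c % 2 = d % 2 ∧
    q = ⟨(a : ℝ) / 2, (b : ℝ) / 2, (c : ℝ) / 2, (d : ℝ) / 2⟩

/-- A unit of the ring ℋ of Hurwitz integers. -/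
def IsUnitH (q : Quat) : Prop :=
  IsHurwitz q ∧ ∃ r : Quat, IsHurwitz r ∧ q * r = 1 ∧ r * q = 1

/-- Membership in the (two-sided) ideal `pℋ`. -/
def InPH (q : Quat) : Prop := ∃ h : Quat, IsHurwitz h ∧ q = qp * h

/-- The ambient space of the lattice `L = 3E₈ ⊕ H`: three pairs (the `E₈` summands)
together with the two coordinates of the hyperbolic cell `H`. -/
abbrev V3 : Type := (Fin 3 → Quat × Quat) × Quat × Quat

/-- The ℋ-valued form on `3E₈ ⊕ H`:  negative definite standard form on each `E₈`
summand and the hyperbolic form `⟨(x₁,x₂),(y₁,y₂)⟩ = x̄₁ p̄ y₂ + x̄₂ p y₁` on `H`. -/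
def ip3 (x y : V3) : Quat :=
  (∑ s : Fin 3, (-(star (x.1 s).1 * (y.1 s).1) - star (x.1 s).2 * (y.1 s).2))
    + star x.2.1 * star qp * y.2.2 + star x.2.2 * qp * y.2.1

/-- Membership in the `E₈` lattice: both coordinates Hurwitz and congruent mod `pℋ`. -/
def memE8 (q : Quat × Quat) : Prop := IsHurwitz q.1 ∧ IsHurwitz q.2 ∧ InPH (q.1 - q.2)

/-- Membership in the lattice `L = 3E₈ ⊕ H`. -/
def memL3 (v : V3) : Prop := (∀ s, memE8 (v.1 s)) ∧ IsHurwitz v.2.1 ∧ IsHurwitz v.2.2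

/-- Right scalar multiplication on the ambient space of `3E₈ ⊕ H`. -/
def rmul3 (v : V3) (q : Quat) : V3 :=
  (fun s => ((v.1 s).1 * q, (v.1 s).2 * q), v.2.1 * q, v.2.2 * q)

/-- The `μ`-reflection in a root `r` : `v ↦ v − r(1−μ)⟨r,v⟩/|r|²`. -/
def refl3 (r : V3) (μ : Quat) (v : V3) : V3 := v - rmul3 r ((1 - μ) * ip3 r v / ip3 r r)

/-- The root `a` of the diagram `D`. -/
def rootA : V3 := (fun _ => (0, 0), 1, -1)
/-- The roots `c_s` of the diagram `D`. -/
def rootC (s : Fin 3) : V3 := (fun t => if t = s then ((1 : Quat), (-1 : Quat)) else 0, 0, 0)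
/-- The roots `e_s` of the diagram `D` (with `(1,1)` in the two other `E₈` slots). -/
def rootE (s : Fin 3) : V3 := (fun t => if t = s then (0 : Quat × Quat) else (1, 1), -qi, -1)
/-- The root `f` of the diagram `D`. -/
def rootF : V3 := (fun _ => (0, qp), -(qi * qp), -qp)
/-- The roots `b_s` of the diagram `D`. -/
def rootB (s : Fin 3) : V3 := (fun t => if t = s then ((0 : Quat), qp) else 0, -1, 0)
/-- The roots `d_s` of the diagram `D`. -/
def rootD (s : Fin 3) : V3 := (fun t => if t = s then (-qp, (0 : Quat)) else 0, 0, 0)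

/-- The set of roots of `L`. -/
def Roots3 : Set V3 := {r | memL3 r ∧ ip3 r r = -2}

/-- The reflection group `R(L)` of `L = 3E₈ ⊕ H`, as the subgroup of permutations of the
ambient space generated by the `μ`-reflections in all roots of `L` (for all units `μ ≠ 1`). -/
def RL3 : Subgroup (Equiv.Perm V3) :=
  Subgroup.closure {g | ∃ r μ, r ∈ Roots3 ∧ IsUnitH μ ∧ μ ≠ 1 ∧ ∀ v, g v = refl3 r μ v}

/-- The seven `points` of the diagram `D`. -/
def Pt : Fin 7 → V3 := ![rootA, rootC 0, rootC 1, rootC 2, rootE 0, rootE 1, rootE 2]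
/-- The seven `lines` of the diagram `D`. -/
def Ln : Fin 7 → V3 := ![rootF, rootB 0, rootB 1, rootB 2, rootD 0, rootD 1, rootD 2]

/-- `ξ = (1+i)/√2`. -/
def xi : Quat := (1 + qi) * ((Real.sqrt 2 : ℝ) : Quat)⁻¹

/-- `(ρ₁,…,ρ₁₄) = (x₁,…,x₇, l₁ξ,…,l₇ξ)`. -/
def rho : Fin 14 → V3 := fun t =>
  if h : (t : ℕ) < 7 then Pt ⟨t, h⟩ else rmul3 (Ln ⟨(t : ℕ) - 7, by omega⟩) xi

/-- The Weyl vector `ρ̄ = (ρ₁ + … + ρ₁₄)/14`. -/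
def rhobar : V3 := (14 : ℝ)⁻¹ • (∑ t : Fin 14, rho t)

/-- The 14 roots of the diagram `D`: the seven points followed by the seven lines. -/
def root14 : Fin 14 → V3 := fun t =>
  if h : (t : ℕ) < 7 then Pt ⟨t, h⟩ else Ln ⟨(t : ℕ) - 7, by omega⟩

/-- The height of a root: `ht(r) = |⟨ρ̄,r⟩| / |ρ̄|²`. -/
def ht3 (r : V3) : ℝ := ‖ip3 rhobar r‖ / (ip3 rhobar rhobar).re

/-!
The seven points `xᵢ` are mutually orthogonal of norm `-2`; completing them by a vector `w` of norm
`1` gives an orthogonal frame of `L ⊗ ℝ`. In the coordinates `m = ⟨w,r⟩` and `αᵢ = p⁻¹⟨xᵢ,r⟩` the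
norm is `|m|² - ∑ |αᵢ|²`, a line has `m = 1` and `α` the indicator of its points, and the height is
`|(3 + √2)m - ∑ αᵢ| / √2`. For a vector of `L` all coordinates are Hurwitz integers, and
`m - ∑_{i ∈ l} αᵢ ∈ pℋ` for every line `l`.

If `r` is a root of height at most `1`, then `∑ |αᵢ|² = |m|² + 2` and Cauchy–Schwarz give
`|m|² < 3`, and integrality excludes `|m|² = 2`. When `m = 0`, either a single `αᵢ` is nonzero and
`r` is a multiple of a point, or two of them are units, which a line through only one of the two
points excludes. When `|m| = 1`, the height bound reads `3 ≤ Re(m̄ ∑ αᵢ)` while `∑ |αᵢ|² = 3`, so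
each `αᵢ` is `0` or `m`; modulo `p`, the three indices with `αᵢ = m` meet every line in an odd
number of points, hence form a line.
-/

section Quaternions

@[simp] lemma qi_re : qi.re = 0 := rfl
@[simp] lemma qi_imI : qi.imI = 1 := rfl
@[simp] lemma qi_imJ : qi.imJ = 0 := rfl
@[simp] lemma qi_imK : qi.imK = 0 := rfl

@[simp] lemma qp_re : qp.re = 1 := by simp [qp]
@[simp] lemma qp_imI : qp.imI = -1 := by simp [qp]
@[simp] lemma qp_imJ : qp.imJ = 0 := by simp [qp]
@[simp] lemma qp_imK : qp.imK = 0 := by simp [qp]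

@[simp] lemma quat_two_re : (2 : Quat).re = 2 := rfl
@[simp] lemma quat_two_imI : (2 : Quat).imI = 0 := rfl
@[simp] lemma quat_two_imJ : (2 : Quat).imJ = 0 := rfl
@[simp] lemma quat_two_imK : (2 : Quat).imK = 0 := rfl

lemma sq_norm_quat (q : Quat) : ‖q‖ ^ 2 = q.re ^ 2 + q.imI ^ 2 + q.imJ ^ 2 + q.imK ^ 2 := by
  rw [sq, ← normSq_eq_norm_mul_self, normSq_def']

lemma star_mul_self_quat (q : Quat) : star q * q = ((‖q‖ ^ 2 : ℝ) : Quat) := by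
  rw [star_mul_self, normSq_eq_norm_mul_self, sq]

lemma norm_qi : ‖qi‖ = 1 :=
  (pow_eq_one_iff_of_nonneg (norm_nonneg qi) two_ne_zero).1 (by simp [sq_norm_quat])

lemma sq_norm_qp : ‖qp‖ ^ 2 = 2 := by
  rw [sq_norm_quat]
  norm_num

lemma inv_two_smul_two_mul (q : Quat) : (2⁻¹ : ℝ) • (2 * q) = q := by
  ext <;> simp

lemma norm_qp : ‖qp‖ = √2 := by
  rw [← sq_norm_qp, Real.sqrt_sq (norm_nonneg _)]

lemma qp_ne_zero : qp ≠ 0 := by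
  simp [← norm_ne_zero_iff, norm_qp]

lemma star_qp_mul_qp : star qp * qp = 2 := by
  rw [star_mul_self_quat, sq_norm_qp]
  rfl

lemma qp_inv : qp⁻¹ = (2⁻¹ : ℝ) • star qp := by
  rw [Quaternion.inv_def, normSq_eq_norm_mul_self, ← sq, sq_norm_qp]

lemma qp_eq_neg_star_mul_qi : qp = -star qp * qi := by
  ext <;> simp

lemma xi_eq : xi = (√2)⁻¹ • star qp := by
  have star_qp : star qp = 1 + qi := by ext <;> simp
  rw [xi, star_qp, ← Quaternion.coe_inv, Quaternion.mul_coe_eq_smul]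

lemma norm_xi : ‖xi‖ = 1 := by
  rw [xi_eq, norm_smul, norm_star, norm_qp, norm_inv, Real.norm_of_nonneg (Real.sqrt_nonneg 2)]
  exact inv_mul_cancel₀ (by norm_num)

end Quaternions

section Hurwitz

variable {q a b : Quat}

/-- In terms of the `ℤ`-basis `(1+i+j+k)/2, i, j, k` the congruences disappear. -/
lemma isHurwitz_iff : IsHurwitz q ↔ ∃ n x y z : ℤ,
    q.re = n / 2 ∧ q.imI = n / 2 + x ∧ q.imJ = n / 2 + y ∧ q.imK = n / 2 + z := by
  constructor
  · rintro ⟨a, b, c, d, hab, hbc, hcd, rfl⟩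
    obtain ⟨x, hx⟩ : (2 : ℤ) ∣ b - a := by omega
    obtain ⟨y, hy⟩ : (2 : ℤ) ∣ c - a := by omega
    obtain ⟨z, hz⟩ : (2 : ℤ) ∣ d - a := by omega
    obtain rfl : b = a + 2 * x := by omega
    obtain rfl : c = a + 2 * y := by omega
    obtain rfl : d = a + 2 * z := by omega
    refine ⟨a, x, y, z, rfl, ?_, ?_, ?_⟩ <;> push_cast <;> ring
  · rintro ⟨n, x, y, z, hre, hI, hJ, hK⟩
    refine ⟨n, n + 2 * x, n + 2 * y, n + 2 * z, by omega, by omega, by omega, ?_⟩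
    ext <;> simp only [hre, hI, hJ, hK] <;> push_cast <;> ring

/-- The ring `ℋ` of Hurwitz integers. -/
def hurwitzRing : Subring Quat where
  carrier := {q | IsHurwitz q}
  zero_mem' := isHurwitz_iff.2 ⟨0, 0, 0, 0, by simp⟩
  one_mem' := isHurwitz_iff.2 ⟨2, -1, -1, -1, by simp⟩
  neg_mem' := by
    intro a ha
    obtain ⟨n, x, y, z, hre, hI, hJ, hK⟩ := isHurwitz_iff.1 ha
    refine isHurwitz_iff.2 ⟨-n, -x, -y, -z, ?_, ?_, ?_, ?_⟩ <;>
      simp [hre, hI, hJ, hK] <;> ring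
  add_mem' := by
    intro a b ha hb
    obtain ⟨n, x, y, z, hre, hI, hJ, hK⟩ := isHurwitz_iff.1 ha
    obtain ⟨n', x', y', z', hre', hI', hJ', hK'⟩ := isHurwitz_iff.1 hb
    refine isHurwitz_iff.2 ⟨n + n', x + x', y + y', z + z', ?_, ?_, ?_, ?_⟩ <;>
      simp [hre, hI, hJ, hK, hre', hI', hJ', hK'] <;> ring
  mul_mem' := by
    intro a b ha hb
    obtain ⟨n, x, y, z, hre, hI, hJ, hK⟩ := isHurwitz_iff.1 ha
    obtain ⟨n', x', y', z', hre', hI', hJ', hK'⟩ := isHurwitz_iff.1 hb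
    refine isHurwitz_iff.2
      ⟨-n * n' - n * (x' + y' + z') - n' * (x + y + z) - 2 * (x * x' + y * y' + z * z'),
      n * n' + n * (x' + z') + n' * (x + y) + x * x' + y * y' + z * z' + y * z' - z * y',
      n * n' + n * (x' + y') + n' * (y + z) + x * x' + y * y' + z * z' + z * x' - x * z',
      n * n' + n * (y' + z') + n' * (x + z) + x * x' + y * y' + z * z' + x * y' - y * x',
      ?_, ?_, ?_, ?_⟩ <;>
      simp [hre, hI, hJ, hK, hre', hI', hJ', hK'] <;> ring

lemma isHurwitz_qi : IsHurwitz qi := isHurwitz_iff.2 ⟨0, 1, 0, 0, by simp⟩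

lemma isHurwitz_qp : IsHurwitz qp := hurwitzRing.sub_mem hurwitzRing.one_mem isHurwitz_qi

lemma IsHurwitz.star_mem (hq : IsHurwitz q) : IsHurwitz (star q) := by
  obtain ⟨n, x, y, z, hre, hI, hJ, hK⟩ := isHurwitz_iff.1 hq
  refine isHurwitz_iff.2 ⟨n, -n - x, -n - y, -n - z, ?_, ?_, ?_, ?_⟩ <;>
    simp [hre, hI, hJ, hK] <;> ring

lemma IsHurwitz.exists_sq_norm_eq_natCast (hq : IsHurwitz q) : ∃ n : ℕ, ‖q‖ ^ 2 = n := by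
  obtain ⟨n, x, y, z, hre, hI, hJ, hK⟩ := isHurwitz_iff.1 hq
  obtain ⟨N, hN⟩ : ∃ N : ℤ, N = n ^ 2 + n * (x + y + z) + x ^ 2 + y ^ 2 + z ^ 2 := ⟨_, rfl⟩
  have norm_eq : ‖q‖ ^ 2 = (N : ℝ) := by
    rw [sq_norm_quat, hre, hI, hJ, hK, hN]
    push_cast
    ring
  have N_nonneg : 0 ≤ N := by
    have : (0 : ℝ) ≤ N := norm_eq ▸ sq_nonneg ‖q‖
    exact_mod_cast this
  lift N to ℕ using N_nonneg
  exact ⟨N, norm_eq⟩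

lemma IsHurwitz.eq_zero_or_one_le_norm (hq : IsHurwitz q) : q = 0 ∨ 1 ≤ ‖q‖ := by
  obtain ⟨n, hn⟩ := hq.exists_sq_norm_eq_natCast
  rcases n.eq_zero_or_pos with rfl | n_pos
  · left
    simpa using hn
  · right
    rw [← one_le_sq_iff₀ (norm_nonneg q), hn]
    exact_mod_cast n_pos

lemma isUnitH_iff : IsUnitH q ↔ IsHurwitz q ∧ ‖q‖ = 1 := by
  constructor
  · rintro ⟨hq, r, hr, hqr, -⟩
    have norm_mul_norm : ‖q‖ * ‖r‖ = 1 := by rw [← norm_mul, hqr, norm_one]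
    have one_le_norm : ∀ {s : Quat}, IsHurwitz s → ‖s‖ ≠ 0 → 1 ≤ ‖s‖ := fun hs hs0 =>
      hs.eq_zero_or_one_le_norm.resolve_left (norm_ne_zero_iff.1 hs0)
    have hq1 := one_le_norm hq (left_ne_zero_of_mul_eq_one norm_mul_norm)
    have hr1 := one_le_norm hr (right_ne_zero_of_mul_eq_one norm_mul_norm)
    exact ⟨hq, by nlinarith⟩
  · rintro ⟨hq, hq1⟩
    refine ⟨hq, star q, hq.star_mem, ?_, ?_⟩
    · rw [self_mul_star, normSq_eq_norm_mul_self, hq1, one_mul, Quaternion.coe_one]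
    · rw [star_mul_self, normSq_eq_norm_mul_self, hq1, one_mul, Quaternion.coe_one]

lemma even_and_even_add_of_even {n x y z : ℤ}
    (h : Even (n * n + n * (x + y + z) + (x * x + y * y + z * z))) :
    Even n ∧ Even (x + y + z) := by
  have h_sum : Even (n * n + n * (x + y + z) + (x + y + z)) := by
    have h_pred := ((Int.even_mul_pred_self x).add (Int.even_mul_pred_self y)).add
      (Int.even_mul_pred_self z)
    have h_sub := h.sub h_pred
    ring_nf at h_sub ⊢
    exact h_sub
  generalize x + y + z = s at h_sum ⊢
  simp only [parity_simps] at h_sum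
  tauto

/-- The norm being multiplicative and conjugation-invariant, this makes `pℋ` a two-sided ideal
stable under conjugation. -/
lemma inPH_iff : InPH q ↔ IsHurwitz q ∧ ∃ n : ℕ, ‖q‖ ^ 2 = 2 * n := by
  constructor
  · rintro ⟨h, hh, rfl⟩
    obtain ⟨n, hn⟩ := hh.exists_sq_norm_eq_natCast
    refine ⟨hurwitzRing.mul_mem isHurwitz_qp hh, n, ?_⟩
    rw [norm_mul, mul_pow, sq_norm_qp, hn]
  · rintro ⟨hq, N, hN⟩
    obtain ⟨n, x, y, z, hre, hI, hJ, hK⟩ := isHurwitz_iff.1 hq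
    have norm_even : Even (n * n + n * (x + y + z) + (x * x + y * y + z * z)) := by
      refine (even_iff_two_dvd).2 ⟨N, ?_⟩
      rw [sq_norm_quat, hre, hI, hJ, hK] at hN
      have : (n * n + n * (x + y + z) + (x * x + y * y + z * z) : ℝ) = 2 * N := by linarith
      exact_mod_cast this
    obtain ⟨⟨m, rfl⟩, s, hs⟩ := even_and_even_add_of_even norm_even
    obtain rfl : z = 2 * s - x - y := by omega
    refine ⟨qp⁻¹ * q, isHurwitz_iff.2 ⟨-x, m + x, y + x - s, m + s, ?_, ?_, ?_, ?_⟩,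
      (mul_inv_cancel_left₀ qp_ne_zero q).symm⟩ <;>
      simp [qp_inv, hre, hI, hJ, hK] <;> ring

/-- The two-sided ideal `pℋ`, as an additive group. -/
def hurwitzIdeal : AddSubgroup Quat where
  carrier := {q | InPH q}
  zero_mem' := ⟨0, hurwitzRing.zero_mem, by simp⟩
  neg_mem' := by
    rintro _ ⟨h, hh, rfl⟩
    exact ⟨-h, hurwitzRing.neg_mem hh, by simp⟩
  add_mem' := by
    rintro _ _ ⟨h, hh, rfl⟩ ⟨h', hh', rfl⟩
    exact ⟨h + h', hurwitzRing.add_mem hh hh', by rw [mul_add]⟩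

lemma inPH_qp : InPH qp := ⟨1, hurwitzRing.one_mem, by simp⟩

lemma InPH.mul_right (ha : InPH a) (hb : IsHurwitz b) : InPH (a * b) := by
  obtain ⟨h, hh, rfl⟩ := ha
  exact ⟨h * b, hurwitzRing.mul_mem hh hb, by rw [mul_assoc]⟩

lemma InPH.mul_left (ha : IsHurwitz a) (hb : InPH b) : InPH (a * b) := by
  obtain ⟨hb, m, hm⟩ := inPH_iff.1 hb
  obtain ⟨n, hn⟩ := ha.exists_sq_norm_eq_natCast
  refine inPH_iff.2 ⟨hurwitzRing.mul_mem ha hb, n * m, ?_⟩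
  rw [norm_mul, mul_pow, hm, hn]
  push_cast
  ring

lemma InPH.star_mem (ha : InPH a) : InPH (star a) := by
  obtain ⟨ha, n, hn⟩ := inPH_iff.1 ha
  exact inPH_iff.2 ⟨ha.star_mem, n, by rw [norm_star, hn]⟩

lemma not_inPH_of_sq_norm_eq_one (hq : ‖q‖ ^ 2 = 1) : ¬ InPH q := by
  intro h
  obtain ⟨-, n, hn⟩ := inPH_iff.1 h
  have : 1 = 2 * n := by exact_mod_cast hq.symm.trans hn
  omega

end Hurwitz

section Form

/-- The form as a real linear map in its second argument. -/
def ipRight (x : V3) : V3 →ₗ[ℝ] Quat where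
  toFun := ip3 x
  map_add' y z := by
    simp only [ip3, Fin.sum_univ_three, Prod.fst_add, Prod.snd_add, Pi.add_apply]
    noncomm_ring
  map_smul' c y := by
    simp only [ip3, Prod.smul_fst, Prod.smul_snd, Pi.smul_apply, mul_smul_comm, smul_add,
      Finset.smul_sum, smul_sub, smul_neg, RingHom.id_apply]

lemma ip3_sub_right (x y z : V3) : ip3 x (y - z) = ip3 x y - ip3 x z :=
  (ipRight x).map_sub y z

lemma ip3_smul_right (x : V3) (c : ℝ) (y : V3) : ip3 x (c • y) = c • ip3 x y :=
  (ipRight x).map_smul c y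

lemma ip3_sum_right {ι : Type*} (x : V3) (s : Finset ι) (y : ι → V3) :
    ip3 x (∑ i ∈ s, y i) = ∑ i ∈ s, ip3 x (y i) :=
  map_sum (ipRight x) y s

lemma ip3_rmul3_right (x y : V3) (q : Quat) : ip3 x (rmul3 y q) = ip3 x y * q := by
  simp only [ip3, rmul3, Fin.sum_univ_three]
  noncomm_ring

lemma star_ip3 (x y : V3) : star (ip3 x y) = ip3 y x := by
  simp only [ip3, Fin.sum_univ_three, star_add, star_sub, star_neg, star_mul, star_star]
  noncomm_ring

lemma memE8.inPH_form {x y : Quat × Quat} (hx : memE8 x) (hy : memE8 y) :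
    InPH (star x.1 * y.1 + star x.2 * y.2) := by
  obtain ⟨-, hx₂, hx⟩ := hx
  obtain ⟨hy₁, hy₂, hy⟩ := hy
  have inPH_two_mul : InPH (2 * (star x.2 * y.2)) := by
    rw [← star_qp_mul_qp]
    exact (inPH_qp.mul_left isHurwitz_qp.star_mem).mul_right
      (hurwitzRing.mul_mem hx₂.star_mem hy₂)
  rw [show star x.1 * y.1 + star x.2 * y.2 = star (x.1 - x.2) * y.1 + star x.2 * (y.1 - y.2)
    + 2 * (star x.2 * y.2) by rw [star_sub]; noncomm_ring]
  exact hurwitzIdeal.add_mem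
    (hurwitzIdeal.add_mem (hx.star_mem.mul_right hy₁) (hy.mul_left hx₂.star_mem)) inPH_two_mul

lemma memL3.inPH_ip3 {x y : V3} (hx : memL3 x) (hy : memL3 y) : InPH (ip3 x y) := by
  refine hurwitzIdeal.add_mem (hurwitzIdeal.add_mem (hurwitzIdeal.sum_mem fun s _ => ?_) ?_) ?_
  · rw [sub_eq_add_neg, ← neg_add]
    exact hurwitzIdeal.neg_mem ((hx.1 s).inPH_form (hy.1 s))
  · exact (inPH_qp.star_mem.mul_left hx.2.1.star_mem).mul_right hy.2.2
  · exact (inPH_qp.mul_left hx.2.2.star_mem).mul_right hy.2.1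

end Form

section Fano

/-- The Fano plane underlying `D`: the set of points incident to each line. -/
def fano : Fin 7 → Finset (Fin 7) :=
  ![{1, 2, 3}, {0, 1, 4}, {0, 2, 5}, {0, 3, 6}, {1, 5, 6}, {2, 4, 6}, {3, 4, 5}]

lemma exists_mem_fano_notMem {x y : Fin 7} (h : x ≠ y) : ∃ l, x ∈ fano l ∧ y ∉ fano l := by
  decide +revert

lemma exists_mem_fano_mem (x y : Fin 7) : ∃ l, x ∈ fano l ∧ y ∈ fano l := by
  decide +revert

lemma card_fano (l : Fin 7) : #(fano l) = 3 := by
  decide +revert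

lemma card_lines_through (i : Fin 7) : #{l | i ∈ fano l} = 3 := by
  decide +revert

lemma eq_fano_of_odd_inter {T : Finset (Fin 7)} (hT : #T = 3) (hodd : ∀ l, Odd #(fano l ∩ T)) :
    ∃ l, T = fano l := by
  obtain ⟨x, hx, y, hy, hxy⟩ := one_lt_card.1 (hT ▸ (by norm_num : 1 < 3))
  obtain ⟨l, hxl, hyl⟩ := exists_mem_fano_mem x y
  have one_lt : 1 < #(fano l ∩ T) := one_lt_card.2 ⟨x, by simp [*], y, by simp [*], hxy⟩
  have three_le : 3 ≤ #(fano l ∩ T) := by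
    obtain ⟨k, hk⟩ := hodd l
    omega
  refine ⟨l, ?_⟩
  rw [← eq_of_subset_of_card_le inter_subset_left ((card_fano l).trans_le three_le)]
  exact (eq_of_subset_of_card_le inter_subset_right (hT.trans_le three_le)).symm

end Fano

section Frame

/-- A norm-one vector orthogonal to the seven points, on which every line takes the value `1`. -/
def pointsNormal : V3 := (fun _ => ((1 / 2 : ℝ) • qp, (1 / 2 : ℝ) • qp), -star qp, -qp)

lemma ip3_Pt (i : Fin 7) (r : V3) : ip3 (Pt i) r =
    ![star qp * r.2.2 - qp * r.2.1,
      (r.1 0).2 - (r.1 0).1, (r.1 1).2 - (r.1 1).1, (r.1 2).2 - (r.1 2).1,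
      -((r.1 1).1 + (r.1 1).2 + (r.1 2).1 + (r.1 2).2) - qp * (r.2.1 + r.2.2),
      -((r.1 2).1 + (r.1 2).2 + (r.1 0).1 + (r.1 0).2) - qp * (r.2.1 + r.2.2),
      -((r.1 0).1 + (r.1 0).2 + (r.1 1).1 + (r.1 1).2) - qp * (r.2.1 + r.2.2)] i := by
  have star_qi_mul : star qi * star qp = qp := by ext <;> simp
  fin_cases i <;>
    simp [ip3, Pt, rootA, rootC, rootE, Fin.sum_univ_three, star_qi_mul, mul_add] <;> abel

lemma ip3_Pt_pointsNormal (i : Fin 7) : ip3 (Pt i) pointsNormal = 0 := by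
  rw [ip3_Pt]
  fin_cases i <;> ext <;> simp [pointsNormal] <;> ring

lemma ip3_pointsNormal_self : ip3 pointsNormal pointsNormal = 1 := by
  ext <;> norm_num [ip3, pointsNormal, -sum_const, Fin.sum_univ_three]

lemma ip3_pointsNormal_Ln (l : Fin 7) : ip3 pointsNormal (Ln l) = 1 := by
  fin_cases l <;> ext <;>
    simp [ip3, Ln, pointsNormal, rootF, rootB, rootD, -sum_const, Fin.sum_univ_three] <;> norm_num

lemma ip3_Pt_Pt (i j : Fin 7) : ip3 (Pt i) (Pt j) = if i = j then -2 else 0 := by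
  have neg_star_qp_sub_qp : -star qp - qp = -2 := by ext <;> norm_num
  have qp_mul_qi : qp * qi = star qp := by ext <;> simp
  have qp_mul_neg_add : qp * (-qi + -1) = -2 := by ext <;> norm_num
  rw [ip3_Pt]
  fin_cases i <;> fin_cases j <;>
    norm_num +decide [Pt, rootA, rootC, rootE, neg_star_qp_sub_qp, qp_mul_qi, qp_mul_neg_add]

lemma ip3_Pt_Ln (i l : Fin 7) : ip3 (Pt i) (Ln l) = if i ∈ fano l then qp else 0 := by
  have qp_mul_qi_mul_qp : qp * (qi * qp) = star qp * qp := by ext <;> norm_num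
  have qp_mul_neg_add : qp * (-(qi * qp) + -qp) = -qp + -qp := by ext <;> norm_num
  rw [ip3_Pt]
  fin_cases i <;> fin_cases l <;>
    simp +decide [Ln, rootF, rootB, rootD, qp_mul_qi_mul_qp, qp_mul_neg_add]

/-- The normal coordinate `⟨w,r⟩` and the seven point coordinates `p⁻¹⟨xᵢ,r⟩`, where `w` is
`pointsNormal`; in these coordinates the form is `m̄m' - ∑ ᾱᵢα'ᵢ`. -/
def coords : V3 →ₗ[ℝ] Quat × (Fin 7 → Quat) :=
  (ipRight pointsNormal).prod
    (LinearMap.pi fun i => LinearMap.mulLeft ℝ qp⁻¹ ∘ₗ ipRight (Pt i))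

/-- The vector with prescribed coordinates. -/
def ofCoords (c : Quat × (Fin 7 → Quat)) : V3 :=
  rmul3 pointsNormal c.1 - (1 / 2 : ℝ) • ∑ i, rmul3 (Pt i) (qp * c.2 i)

lemma coords_fst (r : V3) : (coords r).1 = ip3 pointsNormal r := rfl

lemma coords_snd (r : V3) (i : Fin 7) : (coords r).2 i = qp⁻¹ * ip3 (Pt i) r := rfl

lemma coords_rmul3_fst (r : V3) (q : Quat) : (coords (rmul3 r q)).1 = (coords r).1 * q :=
  ip3_rmul3_right pointsNormal r q

lemma coords_rmul3_snd (r : V3) (q : Quat) (i : Fin 7) :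
    (coords (rmul3 r q)).2 i = (coords r).2 i * q := by
  rw [coords_snd, coords_snd, ip3_rmul3_right, mul_assoc]

lemma ip3_ofCoords (s : V3) (c : Quat × (Fin 7 → Quat)) : ip3 s (ofCoords c) =
    ip3 s pointsNormal * c.1 - (1 / 2 : ℝ) • ∑ i, ip3 s (Pt i) * (qp * c.2 i) := by
  simp only [ofCoords, ip3_sub_right, ip3_smul_right, ip3_sum_right, ip3_rmul3_right]

lemma coords_ofCoords (c : Quat × (Fin 7 → Quat)) : coords (ofCoords c) = c := by
  ext1
  · have ip3_pointsNormal_Pt (i : Fin 7) : ip3 pointsNormal (Pt i) = 0 := by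
      rw [← star_ip3, ip3_Pt_pointsNormal, star_zero]
    simp [coords_fst, ip3_ofCoords, ip3_pointsNormal_self, ip3_pointsNormal_Pt]
  · funext i
    simp [coords_snd, ip3_ofCoords, ip3_Pt_pointsNormal, ip3_Pt_Pt, inv_two_smul_two_mul,
      qp_ne_zero]

lemma coords_injective : Function.Injective coords := by
  have finrank_eq : Module.finrank ℝ V3 = Module.finrank ℝ (Quat × (Fin 7 → Quat)) := by
    simp only [Module.finrank_prod, Module.finrank_pi_fintype, sum_const, card_univ,
      Fintype.card_fin, smul_eq_mul]
    ring
  exact (LinearMap.injective_iff_surjective_of_finrank_eq_finrank finrank_eq).2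
    fun c => ⟨ofCoords c, coords_ofCoords c⟩

lemma ofCoords_coords (r : V3) : ofCoords (coords r) = r :=
  coords_injective (coords_ofCoords _)

lemma ip3_eq_coords (s r : V3) : ip3 s r =
    star (coords s).1 * (coords r).1 - ∑ i, star ((coords s).2 i) * (coords r).2 i := by
  have ip3_Pt_right (i : Fin 7) : ip3 s (Pt i) = star ((coords s).2 i) * star qp := by
    rw [← star_mul, coords_snd, mul_inv_cancel_left₀ qp_ne_zero, star_ip3]
  have half_mul (a b : Quat) : (1 / 2 : ℝ) • (a * star qp * (qp * b)) = a * b := by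
    rw [mul_assoc, ← mul_assoc (star qp), star_qp_mul_qp, ← mul_smul_comm, one_div,
      inv_two_smul_two_mul]
  conv_lhs => rw [← ofCoords_coords r, ip3_ofCoords, ← star_ip3, ← coords_fst]
  simp only [ip3_Pt_right, smul_sum, half_mul]

lemma coords_Pt_fst (i : Fin 7) : (coords (Pt i)).1 = 0 := by
  rw [coords_fst, ← star_ip3, ip3_Pt_pointsNormal, star_zero]

lemma coords_Pt_snd (i j : Fin 7) : (coords (Pt i)).2 j = if j = i then -star qp else 0 := by
  rw [coords_snd, ip3_Pt_Pt, mul_ite, mul_zero, qp_inv]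
  congr 1
  ext <;> simp

lemma coords_Ln_fst (l : Fin 7) : (coords (Ln l)).1 = 1 := ip3_pointsNormal_Ln l

lemma coords_Ln_snd (l i : Fin 7) : (coords (Ln l)).2 i = if i ∈ fano l then 1 else 0 := by
  rw [coords_snd, ip3_Pt_Ln, mul_ite, mul_zero, inv_mul_cancel₀ qp_ne_zero]

end Frame

section WeylVector

lemma sum_rho : ∑ t, rho t = ∑ i, Pt i + ∑ l, rmul3 (Ln l) xi := by
  refine (Fin.sum_univ_add (a := 7) (b := 7) rho).trans ?_
  simp [rho]

lemma neg_star_qp_eq : -star qp = -(√2 • xi) := by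
  rw [xi_eq, smul_smul, mul_inv_cancel₀ (by positivity), one_smul]

lemma coords_rhobar : coords rhobar = ((1 / 2 : ℝ) • xi, fun _ => ((3 - √2) / 14) • xi) := by
  rw [rhobar, sum_rho, map_smul, map_add, map_sum, map_sum]
  ext1
  · simp only [Prod.smul_fst, Prod.fst_add, Prod.fst_sum, coords_Pt_fst, coords_rmul3_fst,
      coords_Ln_fst, one_mul, sum_const, card_univ, Fintype.card_fin, smul_zero, zero_add]
    module
  · funext i
    simp only [Prod.smul_snd, Prod.snd_add, Prod.snd_sum, Pi.smul_apply, Pi.add_apply,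
      Finset.sum_apply, coords_Pt_snd, coords_rmul3_snd, coords_Ln_snd, ite_mul, one_mul,
      zero_mul, sum_ite_eq, mem_univ, if_true, ← sum_filter, sum_const,
      card_lines_through, neg_star_qp_eq]
    module

lemma ip3_rhobar (r : V3) : ip3 rhobar r =
    ((3 - √2) / 14) • (star xi * ((3 + √2) • (coords r).1 - ∑ i, (coords r).2 i)) := by
  have coeff : (3 - √2) / 14 * (3 + √2) = 1 / 2 := by
    linear_combination (-1 / 14 : ℝ) * Real.sq_sqrt (zero_le_two (α := ℝ))
  simp only [ip3_eq_coords, coords_rhobar, Quaternion.star_smul, smul_mul_assoc, mul_sub,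
    mul_smul_comm, smul_sub, smul_smul, coeff, mul_sum, smul_sum]

lemma re_ip3_rhobar_self : (ip3 rhobar rhobar).re = (3 - √2) / 14 * √2 := by
  have coeff : (3 + √2) * (1 / 2) - 7 * ((3 - √2) / 14) = √2 := by ring
  have star_xi_mul_xi : star xi * xi = 1 := by
    rw [star_mul_self_quat, norm_xi, one_pow, Quaternion.coe_one]
  rw [ip3_rhobar, coords_rhobar, sum_const, card_univ, Fintype.card_fin,
    ← Nat.cast_smul_eq_nsmul ℝ, smul_smul, smul_smul, ← sub_smul, Nat.cast_ofNat, coeff,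
    mul_smul_comm, star_xi_mul_xi, smul_smul, re_smul, re_one, smul_eq_mul, mul_one]

lemma ht3_eq (r : V3) :
    ht3 r = ‖(3 + √2) • (coords r).1 - ∑ i, (coords r).2 i‖ / √2 := by
  have coeff_pos : 0 < (3 - √2) / 14 := by
    have : √2 < 3 := by rw [Real.sqrt_lt'] <;> norm_num
    linarith
  rw [ht3, re_ip3_rhobar_self, ip3_rhobar, norm_smul, norm_mul, norm_star, norm_xi, one_mul,
    Real.norm_of_nonneg coeff_pos.le, mul_div_mul_left _ _ coeff_pos.ne']

lemma ht3_rmul3 (r : V3) (u : Quat) : ht3 (rmul3 r u) = ht3 r * ‖u‖ := by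
  rw [ht3, ip3_rmul3_right, norm_mul, mul_div_right_comm, ← ht3]

lemma ht3_Pt (i : Fin 7) : ht3 (Pt i) = 1 := by
  simp [ht3_eq, coords_Pt_fst, coords_Pt_snd, norm_qp]

lemma ht3_Ln (l : Fin 7) : ht3 (Ln l) = 1 := by
  have norm_eq : ‖(3 + √2) • (1 : Quat) - ∑ i, (coords (Ln l)).2 i‖ = √2 := by
    have : (3 + √2) • (1 : Quat) - 3 • (1 : Quat) = √2 • 1 := by module
    simp only [coords_Ln_snd, sum_ite_mem, univ_inter, sum_const, card_fano, this, norm_smul,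
      norm_one, mul_one, Real.norm_of_nonneg (Real.sqrt_nonneg 2)]
  rw [ht3_eq, coords_Ln_fst, norm_eq, div_self (by positivity)]

end WeylVector

section Lattice

lemma memE8_zero : memE8 0 :=
  ⟨hurwitzRing.zero_mem, hurwitzRing.zero_mem,
    hurwitzIdeal.sub_mem hurwitzIdeal.zero_mem hurwitzIdeal.zero_mem⟩

lemma memE8_one_one : memE8 (1, 1) := by
  refine ⟨hurwitzRing.one_mem, hurwitzRing.one_mem, ?_⟩
  rw [sub_self]
  exact hurwitzIdeal.zero_mem

lemma memE8_one_neg_one : memE8 (1, -1) := by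
  refine ⟨hurwitzRing.one_mem, hurwitzRing.neg_mem hurwitzRing.one_mem, ?_⟩
  rw [sub_neg_eq_add, one_add_one_eq_two, ← star_qp_mul_qp]
  exact inPH_qp.mul_left isHurwitz_qp.star_mem

lemma memE8_zero_qp : memE8 (0, qp) :=
  ⟨hurwitzRing.zero_mem, isHurwitz_qp, hurwitzIdeal.sub_mem hurwitzIdeal.zero_mem inPH_qp⟩

lemma memE8_neg_qp_zero : memE8 (-qp, 0) :=
  ⟨hurwitzRing.neg_mem isHurwitz_qp, hurwitzRing.zero_mem,
    hurwitzIdeal.sub_mem (hurwitzIdeal.neg_mem inPH_qp) hurwitzIdeal.zero_mem⟩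

lemma memE8_ite {P : Prop} [Decidable P] {x y : Quat × Quat} (hx : memE8 x) (hy : memE8 y) :
    memE8 (if P then x else y) := by
  split_ifs <;> assumption

lemma memL3_Pt (i : Fin 7) : memL3 (Pt i) := by
  have rootC_mem (s : Fin 3) : memL3 (rootC s) :=
    ⟨fun _ => memE8_ite memE8_one_neg_one memE8_zero, hurwitzRing.zero_mem, hurwitzRing.zero_mem⟩
  have rootE_mem (s : Fin 3) : memL3 (rootE s) :=
    ⟨fun _ => memE8_ite memE8_zero memE8_one_one, hurwitzRing.neg_mem isHurwitz_qi,
      hurwitzRing.neg_mem hurwitzRing.one_mem⟩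
  have rootA_mem : memL3 rootA :=
    ⟨fun _ => memE8_zero, hurwitzRing.one_mem, hurwitzRing.neg_mem hurwitzRing.one_mem⟩
  fin_cases i
  exacts [rootA_mem, rootC_mem 0, rootC_mem 1, rootC_mem 2, rootE_mem 0, rootE_mem 1, rootE_mem 2]

lemma memL3_Ln (l : Fin 7) : memL3 (Ln l) := by
  have rootB_mem (s : Fin 3) : memL3 (rootB s) :=
    ⟨fun _ => memE8_ite memE8_zero_qp memE8_zero, hurwitzRing.neg_mem hurwitzRing.one_mem,
      hurwitzRing.zero_mem⟩
  have rootD_mem (s : Fin 3) : memL3 (rootD s) :=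
    ⟨fun _ => memE8_ite memE8_neg_qp_zero memE8_zero, hurwitzRing.zero_mem, hurwitzRing.zero_mem⟩
  have rootF_mem : memL3 rootF :=
    ⟨fun _ => memE8_zero_qp, hurwitzRing.neg_mem (hurwitzRing.mul_mem isHurwitz_qi isHurwitz_qp),
      hurwitzRing.neg_mem isHurwitz_qp⟩
  fin_cases l
  exacts [rootF_mem, rootB_mem 0, rootB_mem 1, rootB_mem 2, rootD_mem 0, rootD_mem 1, rootD_mem 2]

variable {r : V3}

lemma memL3.isHurwitz_coords_snd (hr : memL3 r) (i : Fin 7) : IsHurwitz ((coords r).2 i) := by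
  obtain ⟨h, hh, ip3_eq⟩ := (memL3_Pt i).inPH_ip3 hr
  rwa [coords_snd, ip3_eq, inv_mul_cancel_left₀ qp_ne_zero]

lemma memL3.inPH_coords_fst_sub_sum (hr : memL3 r) (l : Fin 7) :
    InPH ((coords r).1 - ∑ i ∈ fano l, (coords r).2 i) := by
  have ip3_Ln : ip3 (Ln l) r = (coords r).1 - ∑ i ∈ fano l, (coords r).2 i := by
    simp [ip3_eq_coords, coords_Ln_fst, coords_Ln_snd, apply_ite star, sum_ite_mem]
  exact ip3_Ln ▸ (memL3_Ln l).inPH_ip3 hr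

lemma memL3.isHurwitz_coords_fst (hr : memL3 r) : IsHurwitz (coords r).1 := by
  obtain ⟨h_diff, -⟩ := inPH_iff.1 (hr.inPH_coords_fst_sub_sum 0)
  rw [← sub_add_cancel (coords r).1 (∑ i ∈ fano 0, (coords r).2 i)]
  exact hurwitzRing.add_mem h_diff (hurwitzRing.sum_mem fun i _ => hr.isHurwitz_coords_snd i)

lemma sum_sq_norm_coords_snd (hr : ip3 r r = -2) :
    ∑ i, ‖(coords r).2 i‖ ^ 2 = ‖(coords r).1‖ ^ 2 + 2 := by
  have coe_eq : algebraMap ℝ Quat (‖(coords r).1‖ ^ 2 - ∑ i, ‖(coords r).2 i‖ ^ 2) =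
      algebraMap ℝ Quat (-2) := by
    rw [map_sub, map_sum, map_neg, map_ofNat, ← hr, ip3_eq_coords]
    simp only [star_mul_self_quat]
    rfl
  linarith [(algebraMap ℝ Quat).injective coe_eq]

end Lattice

section SumsOfShortVectors

variable {ι E : Type*} [Fintype ι] [NormedAddCommGroup E] {α : ι → E}

lemma sq_norm_sum_le (α : ι → E) : ‖∑ i, α i‖ ^ 2 ≤ Fintype.card ι * ∑ i, ‖α i‖ ^ 2 :=
  calc ‖∑ i, α i‖ ^ 2 ≤ (∑ i, ‖α i‖) ^ 2 := by gcongr; exact norm_sum_le _ _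
    _ ≤ Fintype.card ι * ∑ i, ‖α i‖ ^ 2 := sq_sum_le_card_mul_sum_sq

lemma norm_le_sq_norm {x : E} (hx : x = 0 ∨ 1 ≤ ‖x‖) : ‖x‖ ≤ ‖x‖ ^ 2 := by
  rcases hx with rfl | hx
  · simp
  · exact le_self_pow₀ hx two_ne_zero

lemma norm_sum_le_sum_sq_norm (hα : ∀ i, α i = 0 ∨ 1 ≤ ‖α i‖) :
    ‖∑ i, α i‖ ≤ ∑ i, ‖α i‖ ^ 2 :=
  (norm_sum_le _ _).trans (sum_le_sum fun i _ => norm_le_sq_norm (hα i))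

lemma exists_single_or_pair [DecidableEq ι] (hα : ∀ i, α i = 0 ∨ 1 ≤ ‖α i‖)
    (hsum : ∑ i, ‖α i‖ ^ 2 = 2) :
    (∃ x v, ‖v‖ ^ 2 = 2 ∧ α = Pi.single x v) ∨
      ∃ x y, x ≠ y ∧ ‖α x‖ ^ 2 = 1 ∧ ∀ i, i ≠ x → i ≠ y → α i = 0 := by
  classical
  set S : Finset ι := {i | α i ≠ 0}
  have notMem_S {i : ι} : i ∉ S ↔ α i = 0 := by simp [S]
  have one_le {i : ι} (hi : i ∈ S) : 1 ≤ ‖α i‖ ^ 2 :=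
    one_le_pow₀ ((hα i).resolve_left (mem_filter.1 hi).2)
  have sum_S : ∑ i ∈ S, ‖α i‖ ^ 2 = 2 := by
    rw [← hsum]
    exact sum_subset (subset_univ S) fun i _ hi => by simp [notMem_S.1 hi]
  have card_le : #S ≤ 2 := by
    have : (#S : ℝ) ≤ 2 := by
      rw [← sum_S, card_eq_sum_ones, Nat.cast_sum, Nat.cast_one]
      exact sum_le_sum fun i => one_le
    exact_mod_cast this
  interval_cases hcard : #S
  · simp [card_eq_zero.1 hcard] at sum_S
  · obtain ⟨x, hx⟩ := card_eq_one.1 hcard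
    rw [hx, sum_singleton] at sum_S
    refine .inl ⟨x, α x, sum_S, funext fun i => ?_⟩
    rcases eq_or_ne i x with rfl | hi
    · simp
    · rw [Pi.single_eq_of_ne hi, notMem_S.1 (by simpa [hx])]
  · obtain ⟨x, y, hxy, hS⟩ := card_eq_two.1 hcard
    rw [hS, sum_pair hxy] at sum_S
    have hx : 1 ≤ ‖α x‖ ^ 2 := one_le (by simp [hS])
    have hy : 1 ≤ ‖α y‖ ^ 2 := one_le (by simp [hS])
    exact .inr ⟨x, y, hxy, by linarith, fun i hix hiy => notMem_S.1 (by simp [hS, hix, hiy])⟩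

variable [InnerProductSpace ℝ E] {m x : E}

open scoped RealInnerProductSpace

lemma eq_zero_or_eq_of_sq_norm_le_inner (hm : ‖m‖ = 1) (hx : x = 0 ∨ 1 ≤ ‖x‖)
    (h : ‖x‖ ^ 2 ≤ ⟪m, x⟫) : x = 0 ∨ x = m := by
  refine hx.imp_right fun one_le => ?_
  have inner_le : ⟪m, x⟫ ≤ ‖x‖ := by simpa [hm] using real_inner_le_norm m x
  have norm_x : ‖x‖ = 1 := by nlinarith
  rw [norm_x] at h inner_le
  exact ((inner_eq_one_iff_of_norm_eq_one hm norm_x).1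
    (le_antisymm inner_le (one_pow (M := ℝ) 2 ▸ h))).symm

/-- Here Cauchy–Schwarz is sharp in every term. -/
lemma eq_zero_or_eq_of_sum_sq_norm_le_inner_sum (hm : ‖m‖ = 1) (hα : ∀ i, α i = 0 ∨ 1 ≤ ‖α i‖)
    (h : ∑ i, ‖α i‖ ^ 2 ≤ ⟪m, ∑ i, α i⟫) (i : ι) : α i = 0 ∨ α i = m := by
  have inner_le (i : ι) : ⟪m, α i⟫ ≤ ‖α i‖ ^ 2 := by
    have inner_le_norm : ⟪m, α i⟫ ≤ ‖α i‖ := by simpa [hm] using real_inner_le_norm m (α i)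
    exact inner_le_norm.trans (norm_le_sq_norm (hα i))
  have sum_eq : ∑ i, ⟪m, α i⟫ = ∑ i, ‖α i‖ ^ 2 :=
    le_antisymm (sum_le_sum fun i _ => inner_le i) (by rwa [← inner_sum])
  refine eq_zero_or_eq_of_sq_norm_le_inner hm (hα i) ?_
  exact ((sum_eq_sum_iff_of_le fun i _ => inner_le i).1 sum_eq i (mem_univ i)).ge

lemma sub_le_inner_of_norm_sub_le {c d : ℝ} (hm : ‖m‖ = 1) (h : ‖c • m - x‖ ≤ d) :
    c - d ≤ ⟪m, x⟫ := by
  have := real_inner_le_norm m (c • m - x)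
  rw [inner_sub_right, real_inner_smul_right, real_inner_self_eq_norm_sq, hm] at this
  linarith

end SumsOfShortVectors

section Classification

section Norm

variable {E : Type*} [NormedAddCommGroup E] [NormedSpace ℝ E] {m : E} {α : Fin 7 → E}

lemma mul_norm_le_of_norm_sub_le {x : E} {c d : ℝ} (hc : 0 ≤ c) (h : ‖c • m - x‖ ≤ d) :
    c * ‖m‖ ≤ d + ‖x‖ := by
  rw [← Real.norm_of_nonneg hc, ← norm_smul]
  linarith [norm_sub_norm_le (c • m) x]

/-- In coordinates, `hα` says that the vector has norm `-2` and `hle` that its height is at most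
`1`. -/
lemma sq_norm_lt_three (hα : ∑ i, ‖α i‖ ^ 2 = ‖m‖ ^ 2 + 2)
    (hle : ‖(3 + √2) • m - ∑ i, α i‖ ≤ √2) : ‖m‖ ^ 2 < 3 := by
  have cauchy_schwarz := sq_norm_sum_le α
  rw [hα, Fintype.card_fin, Nat.cast_ofNat] at cauchy_schwarz
  have sq_sqrt_two : √2 ^ 2 = 2 := Real.sq_sqrt zero_le_two
  have sqrt_two_gt : 7 / 5 < √2 := Real.lt_sqrt_of_sq_lt (by norm_num)
  have lower := mul_norm_le_of_norm_sub_le (by positivity) hle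
  by_contra! three_le
  have norm_gt : 17 / 10 < ‖m‖ := lt_of_pow_lt_pow_left₀ 2 (norm_nonneg m) (by linarith)
  have sq_le : ((3 + √2) * ‖m‖ - √2) ^ 2 ≤ 7 * (‖m‖ ^ 2 + 2) :=
    (pow_le_pow_left₀ (by nlinarith) (by linarith) 2).trans cauchy_schwarz
  have quadratic : (4 + 6 * √2) * (‖m‖ ^ 2 - ‖m‖) ≤ 12 := by
    linear_combination sq_le + (-‖m‖ ^ 2 + 2 * ‖m‖ - 1) * sq_sqrt_two
  nlinarith

lemma sq_norm_ne_two (hα : ∑ i, ‖α i‖ ^ 2 = ‖m‖ ^ 2 + 2)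
    (hle : ‖(3 + √2) • m - ∑ i, α i‖ ≤ √2) (hint : ∀ i, α i = 0 ∨ 1 ≤ ‖α i‖) :
    ‖m‖ ^ 2 ≠ 2 := by
  intro hm
  have norm_m : ‖m‖ = √2 := by rw [← hm, Real.sqrt_sq (norm_nonneg m)]
  have sum_le := norm_sum_le_sum_sq_norm hint
  have lower := mul_norm_le_of_norm_sub_le (by positivity) hle
  have sqrt_two_gt : 7 / 5 < √2 := Real.lt_sqrt_of_sq_lt (by norm_num)
  rw [hα, hm] at sum_le
  rw [norm_m] at lower
  nlinarith [Real.sq_sqrt (zero_le_two (α := ℝ))]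

end Norm

lemma odd_of_inPH_sub_nsmul {m : Quat} {k : ℕ} (hm : ‖m‖ = 1) (h : InPH (m - k • m)) :
    Odd k := by
  obtain ⟨-, n, hn⟩ := inPH_iff.1 h
  have sub_eq : m - k • m = (1 - k : ℝ) • m := by module
  rw [sub_eq, norm_smul, hm, mul_one, Real.norm_eq_abs, sq_abs] at hn
  have sq_eq : (1 - k : ℤ) ^ 2 = 2 * n := by exact_mod_cast hn
  have even_sub : Even (1 - k : ℤ) := by
    rw [← Int.even_pow' two_ne_zero, sq_eq]
    exact even_two_mul _
  simpa [parity_simps] using even_sub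

lemma exists_eq_ite_mem_fano {m : Quat} {α : Fin 7 → Quat} (hm : ‖m‖ = 1)
    (zero_or_m : ∀ i, α i = 0 ∨ α i = m) (sum_sq : ∑ i, ‖α i‖ ^ 2 = 3)
    (inPH_sub : ∀ l, InPH (m - ∑ i ∈ fano l, α i)) :
    ∃ l, ∀ i, α i = if i ∈ fano l then m else 0 := by
  classical
  set T : Finset (Fin 7) := {i | α i = m}
  have α_eq (i : Fin 7) : α i = if i ∈ T then m else 0 := by
    split_ifs with hi
    · exact (mem_filter.1 hi).2
    · exact (zero_or_m i).resolve_right fun h => hi (mem_filter.2 ⟨mem_univ i, h⟩)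
  have card_T : #T = 3 := by
    simp only [α_eq, apply_ite norm, hm, norm_zero, ite_pow, one_pow] at sum_sq
    exact_mod_cast (by simpa using sum_sq : (#T : ℝ) = 3)
  have odd_inter (l : Fin 7) : Odd #(fano l ∩ T) := by
    have := inPH_sub l
    simp only [α_eq, sum_ite_mem, sum_const] at this
    exact odd_of_inPH_sub_nsmul hm this
  obtain ⟨l, hl⟩ := eq_fano_of_odd_inter card_T odd_inter
  exact ⟨l, hl ▸ α_eq⟩

lemma exists_unit_of_sq_norm_eq_two {q : Quat} (hq : IsHurwitz q) (hq2 : ‖q‖ ^ 2 = 2) :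
    ∃ u, IsUnitH u ∧ q = -star qp * u := by
  obtain ⟨h, hh, rfl⟩ := inPH_iff.2 ⟨hq, 1, by simpa using hq2⟩
  rw [norm_mul, mul_pow, sq_norm_qp] at hq2
  have norm_h : ‖h‖ = 1 :=
    (pow_eq_one_iff_of_nonneg (norm_nonneg h) two_ne_zero).1 (by linarith)
  refine ⟨qi * h, isUnitH_iff.2 ⟨hurwitzRing.mul_mem isHurwitz_qi hh, ?_⟩, ?_⟩
  · rw [norm_mul, norm_qi, norm_h, one_mul]
  · rw [← mul_assoc, ← qp_eq_neg_star_mul_qi]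

variable {r : V3}

lemma coords_fst_eq_zero_or_norm_eq_one (hr : memL3 r) (hroot : ip3 r r = -2)
    (hle : ‖(3 + √2) • (coords r).1 - ∑ i, (coords r).2 i‖ ≤ √2) :
    (coords r).1 = 0 ∨ ‖(coords r).1‖ = 1 := by
  have sum_sq := sum_sq_norm_coords_snd hroot
  have lt_three := sq_norm_lt_three sum_sq hle
  have ne_two := sq_norm_ne_two sum_sq hle fun i =>
    (hr.isHurwitz_coords_snd i).eq_zero_or_one_le_norm
  obtain ⟨n, hn⟩ := hr.isHurwitz_coords_fst.exists_sq_norm_eq_natCast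
  rw [hn] at lt_three ne_two
  have n_lt : n < 3 := by exact_mod_cast lt_three
  have n_ne : n ≠ 2 := by exact_mod_cast ne_two
  obtain rfl | rfl : n = 0 ∨ n = 1 := by omega
  · exact .inl (by simpa using hn)
  · rw [Nat.cast_one, pow_eq_one_iff_of_nonneg (norm_nonneg _) two_ne_zero] at hn
    exact .inr hn

lemma exists_eq_rmul3_Pt (hr : memL3 r) (hroot : ip3 r r = -2) (hm : (coords r).1 = 0) :
    ∃ i u, IsUnitH u ∧ r = rmul3 (Pt i) u := by
  have hurwitz := hr.isHurwitz_coords_snd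
  have sum_sq : ∑ i, ‖(coords r).2 i‖ ^ 2 = 2 := by simp [sum_sq_norm_coords_snd hroot, hm]
  rcases exists_single_or_pair (fun i => (hurwitz i).eq_zero_or_one_le_norm) sum_sq with
    ⟨x, v, hv, single⟩ | ⟨x, y, hxy, hx, h_zero⟩
  · have v_hurwitz : IsHurwitz v := by simpa [single] using hurwitz x
    obtain ⟨u, hu, rfl⟩ := exists_unit_of_sq_norm_eq_two v_hurwitz hv
    refine ⟨x, u, hu, coords_injective (Prod.ext ?_ (funext fun i => ?_))⟩
    · rw [coords_rmul3_fst, hm, coords_Pt_fst, zero_mul]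
    · rw [coords_rmul3_snd, single, coords_Pt_snd, ite_mul, zero_mul, Pi.single_apply]
  · obtain ⟨l, hxl, hyl⟩ := exists_mem_fano_notMem hxy
    have sum_l : ∑ i ∈ fano l, (coords r).2 i = (coords r).2 x :=
      sum_eq_single_of_mem x hxl fun i hi hix => h_zero i hix (ne_of_mem_of_not_mem hi hyl)
    have inPH_sub := hr.inPH_coords_fst_sub_sum l
    rw [hm, sum_l, zero_sub] at inPH_sub
    exact absurd inPH_sub (not_inPH_of_sq_norm_eq_one (by rwa [norm_neg]))

lemma exists_eq_rmul3_Ln (hr : memL3 r) (hroot : ip3 r r = -2) (hm : ‖(coords r).1‖ = 1)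
    (hle : ‖(3 + √2) • (coords r).1 - ∑ i, (coords r).2 i‖ ≤ √2) :
    ∃ l u, IsUnitH u ∧ r = rmul3 (Ln l) u := by
  have sum_sq : ∑ i, ‖(coords r).2 i‖ ^ 2 = 3 := by
    rw [sum_sq_norm_coords_snd hroot, hm]
    norm_num
  have zero_or_fst := eq_zero_or_eq_of_sum_sq_norm_le_inner_sum hm
    (fun i => (hr.isHurwitz_coords_snd i).eq_zero_or_one_le_norm)
    (by linarith [sub_le_inner_of_norm_sub_le hm hle])
  obtain ⟨l, coords_snd_eq⟩ :=
    exists_eq_ite_mem_fano hm zero_or_fst sum_sq hr.inPH_coords_fst_sub_sum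
  refine ⟨l, (coords r).1, isUnitH_iff.2 ⟨hr.isHurwitz_coords_fst, hm⟩,
    coords_injective (Prod.ext ?_ (funext fun i => ?_))⟩
  · rw [coords_rmul3_fst, coords_Ln_fst, one_mul]
  · rw [coords_rmul3_snd, coords_snd_eq, coords_Ln_snd, ite_mul, one_mul, zero_mul]

end Classification

section MinimalHeight

lemma root14_castAdd (i : Fin 7) : root14 (Fin.castAdd 7 i) = Pt i := by
  simp [root14]

lemma root14_natAdd (l : Fin 7) : root14 (Fin.natAdd 7 l) = Ln l := by
  simp [root14]

lemma exists_eq_rmul3_root14_of_ht3_le_one {r : V3} (hr : memL3 r) (hroot : ip3 r r = -2)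
    (hle : ht3 r ≤ 1) : ∃ (t : Fin 14) (u : Quat), IsUnitH u ∧ r = rmul3 (root14 t) u := by
  rw [ht3_eq, div_le_one (by positivity)] at hle
  rcases coords_fst_eq_zero_or_norm_eq_one hr hroot hle with hm | hm
  · obtain ⟨i, u, hu, rfl⟩ := exists_eq_rmul3_Pt hr hroot hm
    exact ⟨Fin.castAdd 7 i, u, hu, by rw [root14_castAdd]⟩
  · obtain ⟨l, u, hu, rfl⟩ := exists_eq_rmul3_Ln hr hroot hm hle
    exact ⟨Fin.natAdd 7 l, u, hu, by rw [root14_natAdd]⟩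

lemma ht3_root14 (t : Fin 14) : ht3 (root14 t) = 1 := by
  refine Fin.addCases (m := 7) (n := 7) (fun i => ?_) (fun l => ?_) t
  · rw [root14_castAdd, ht3_Pt]
  · rw [root14_natAdd, ht3_Ln]

end MinimalHeight

/-- Every root `r` of `L` with `ht(r) ≤ 1` is a unit multiple of one of
the 14 roots of the diagram `D`; all unit multiples of the 14 roots have height exactly 1,
and every other root has height strictly greater than 1. -/
theorem roots_of_minimal_height :
    (∀ r, memL3 r → ip3 r r = -2 → ht3 r ≤ 1 →
      ∃ (t : Fin 14) (u : Quat), IsUnitH u ∧ r = rmul3 (root14 t) u) ∧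
    (∀ (t : Fin 14) (u : Quat), IsUnitH u → ht3 (rmul3 (root14 t) u) = 1) ∧
    (∀ r, memL3 r → ip3 r r = -2 →
      (¬ ∃ (t : Fin 14) (u : Quat), IsUnitH u ∧ r = rmul3 (root14 t) u) → 1 < ht3 r) := by
  refine ⟨fun _ => exists_eq_rmul3_root14_of_ht3_le_one,
    fun t u hu => ?_, fun r hr hroot not_multiple => ?_⟩
  · rw [ht3_rmul3, ht3_root14, (isUnitH_iff.1 hu).2, one_mul]
  · by_contra! hle
    exact not_multiple (exists_eq_rmul3_root14_of_ht3_le_one hr hroot hle)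
end
end

section
/- Let ε = (1−i−j+k)/2, let r₂ = (0; 1, −1) and r₃ = (0; 1, −ε) be the indicated roots of L = Λ⊕H, and let R = φ_{r₃}^i ∘ φ_{r₂}^j. Then for every λ ∈ Λ and every purely imaginary quaternion z, T_{λ,z}⁻¹ ∘ R ∘ T_{λ,z} ∘ R⁻¹ = T_{λ(ε̄−1), εzε̄ − z + Im⟨λε̄, −λ⟩}. -/
/- Formalization over the ring ℋ of Hurwitz integers inside the real quaternions. -/

noncomputable section
open Quaternion Finset

/-- `ω = (−1+i+j+k)/2`. -/
def omg : Quat := ⟨-1/2, 1/2, 1/2, 1/2⟩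

/-- Membership in the ideal `2ℋ`. -/
def In2H (q : Quat) : Prop := ∃ h : Quat, IsHurwitz h ∧ q = 2 * h
/-- Membership in the ideal `(2+2i)ℋ`. -/
def In2p2iH (q : Quat) : Prop := ∃ h : Quat, IsHurwitz h ∧ q = (2 + 2 * qi) * h

/-- The quaternionic Leech lattice `Λ` (coordinates `(v∞,v₀,v₁,v₂,v₃,v₄)`). -/
def memLeech (v : Fin 6 → Quat) : Prop :=
  (∀ s, IsHurwitz (v s)) ∧
  InPH (v 3 - v 4) ∧ InPH (v 4 - v 5) ∧
  In2H ((v 2 + v 5) * star omg + (v 3 + v 4) * omg) ∧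
  In2H ((v 1 + v 2) * omg + (v 3 + v 5) * star omg) ∧
  In2p2iH (-(v 0) * (qi + qj + qk) + v 1 + v 2 + v 3 + v 4 + v 5)

/-- The ambient space of `L = Λ ⊕ H`: vectors `(λ; μ, ν)`. -/
abbrev VL : Type := (Fin 6 → Quat) × Quat × Quat

/-- The form on (the ambient space of) the Leech lattice: `⟨x,y⟩ = −(1/2) Σ x̄ₛ yₛ`. -/
def ipLeech (x y : Fin 6 → Quat) : Quat := -(2 : Quat)⁻¹ * ∑ s : Fin 6, star (x s) * y s

/-- The ℋ-valued form on `L = Λ ⊕ H`. -/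
def ipLL (x y : VL) : Quat :=
  ipLeech x.1 y.1 + star x.2.1 * star qp * y.2.2 + star x.2.2 * qp * y.2.1

/-- Membership in the lattice `L = Λ ⊕ H`. -/
def memLL (v : VL) : Prop := memLeech v.1 ∧ IsHurwitz v.2.1 ∧ IsHurwitz v.2.2

/-- Right scalar multiplication on the ambient space of `Λ ⊕ H`. -/
def rmulL (v : VL) (q : Quat) : VL := (fun s => v.1 s * q, v.2.1 * q, v.2.2 * q)

/-- The `μ`-reflection in a root `r` : `v ↦ v − r(1−μ)⟨r,v⟩/|r|²`. -/
def reflL (r : VL) (μ : Quat) (v : VL) : VL := v - rmulL r ((1 - μ) * ipLL r v / ipLL r r)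

/-- Right scalar multiplication on (the ambient space of) the Leech lattice. -/
def rmulLam (lam : Fin 6 → Quat) (q : Quat) : Fin 6 → Quat := fun s => lam s * q

/-- The translation `T_{λ,z}` :
`(m; μ, ν) ↦ (m + λμ; μ, ν − p̄⁻¹⟨λ,m⟩ + p̄⁻¹(z − ⟨λ,λ⟩/2)μ)`. -/
def Tlz (lam : Fin 6 → Quat) (z : Quat) (v : VL) : VL :=
  (v.1 + rmulLam lam v.2.1, v.2.1,
   v.2.2 - (star qp)⁻¹ * ipLeech lam v.1 + (star qp)⁻¹ * (z - ipLeech lam lam / 2) * v.2.1)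

/-- The imaginary part `Im q = (q − q̄)/2` of a quaternion. -/
def Imq (q : Quat) : Quat := (q - star q) / 2

/-- `ε = (1−i−j+k)/2`. -/
def eps : Quat := ⟨1/2, -1/2, -1/2, 1/2⟩

/-- The root `r₂ = (0; 1, −1)` of `Λ ⊕ H`. -/
def r2 : VL := (0, 1, -1)
/-- The root `r₃ = (0; 1, −ε)` of `Λ ⊕ H`. -/
def r3 : VL := (0, 1, -eps)

/-- `R = φ_{r₃}^i ∘ φ_{r₂}^j`. -/
def Rf : VL → VL := fun v => reflL r3 qi (reflL r2 qj v)

/- `R` fixes `Λ` pointwise and acts on `H` by a triangular matrix with diagonal `(ε, p̄⁻¹εp̄)`, so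
it normalizes the group of translations: `R ∘ T_{λ,z} ∘ R⁻¹ = T_{λε̄, εzε̄}`. The commutator is
then read off from the Heisenberg composition law
`T_{λ,z} ∘ T_{κ,w} = T_{λ+κ, z+w+Im⟨κ,λ⟩}`. -/

attribute [simps] qi qj qk eps

theorem star_qp_ne_zero : star qp ≠ 0 := by
  intro h
  simpa [qp] using congrArg (fun q : Quat => q.re) h

theorem inv_star_qp : (star qp)⁻¹ = (2⁻¹ : ℝ) • qp := by
  refine inv_eq_of_mul_eq_one_right ?_
  ext <;> norm_num [qp]

theorem div_two_eq_smul (q : Quat) : q / 2 = (2⁻¹ : ℝ) • q := by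
  have h : (2 : Quat)⁻¹ = ((2⁻¹ : ℝ) : Quat) := by
    rw [Quaternion.coe_inv]
    rfl
  rw [div_eq_mul_inv, h, mul_coe_eq_smul]

section LeechForm

variable (x y w : Fin 6 → Quat) (q : Quat)

theorem ipLeech_eq_smul_sum : ipLeech x y = (-2⁻¹ : ℝ) • ∑ s, star (x s) * y s := by
  rw [ipLeech, neg_mul, neg_smul, ← div_two_eq_smul, div_eq_mul_inv,
    (Commute.ofNat_left 2 (∑ s, star (x s) * y s)).inv_left₀.eq]

theorem star_ipLeech : star (ipLeech x y) = ipLeech y x := by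
  simp only [ipLeech_eq_smul_sum, Quaternion.star_smul, star_sum, star_mul, star_star]

theorem ipLeech_zero_left : ipLeech 0 y = 0 := by
  simp [ipLeech]

theorem ipLeech_add_right : ipLeech x (y + w) = ipLeech x y + ipLeech x w := by
  simp only [ipLeech, Pi.add_apply, mul_add, sum_add_distrib]

theorem ipLeech_add_left : ipLeech (x + y) w = ipLeech x w + ipLeech y w := by
  rw [← star_ipLeech, ipLeech_add_right, star_add, star_ipLeech, star_ipLeech]

theorem ipLeech_neg_right : ipLeech x (fun s => -y s) = -ipLeech x y := by
  simp only [ipLeech, mul_neg, sum_neg_distrib]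

theorem ipLeech_rmulLam_right : ipLeech x (rmulLam y q) = ipLeech x y * q := by
  simp only [ipLeech, rmulLam, ← mul_assoc, ← sum_mul]

theorem ipLeech_rmulLam_left : ipLeech (rmulLam x q) y = star q * ipLeech x y := by
  rw [← star_ipLeech, ipLeech_rmulLam_right, star_mul, star_ipLeech]

end LeechForm

section Translations

variable (lam lam' : Fin 6 → Quat) (z z' : Quat) (v : VL)

theorem Tlz_Tlz :
    Tlz lam z (Tlz lam' z' v) = Tlz (lam + lam') (z + z' + Imq (ipLeech lam' lam)) v := by
  have hform : z + z' + Imq (ipLeech lam' lam) - ipLeech (lam + lam') (lam + lam') / 2 =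
      z - ipLeech lam lam / 2 + (z' - ipLeech lam' lam' / 2) - ipLeech lam lam' := by
    simp only [Imq, star_ipLeech, ipLeech_add_left, ipLeech_add_right, div_two_eq_smul]
    module
  refine Prod.ext ?_ (Prod.ext rfl ?_)
  · funext s
    simp only [Tlz, rmulLam, Pi.add_apply, add_mul]
    abel
  · simp only [Tlz, hform]
    simp only [ipLeech_add_left, ipLeech_add_right, ipLeech_rmulLam_right]
    noncomm_ring

/-- The map that is the identity on `Λ` and the triangular matrix with rows `(α, 0)` and
`(c, p̄⁻¹αp̄)` on `H`. For `|α| = 1` the second diagonal entry is the one forced on an isometry by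
the first, whatever `c` is. -/
def triangularMap (α c : Quat) (v : VL) : VL :=
  (v.1, α * v.2.1, c * v.2.1 + (star qp)⁻¹ * α * star qp * v.2.2)

variable {α : Quat} (hα : star α * α = 1) (c : Quat)
include hα

theorem triangularMap_Tlz :
    triangularMap α c (Tlz lam z v) =
      Tlz (rmulLam lam (star α)) (α * z * star α) (triangularMap α c v) := by
  have hcancel (q : Quat) : star α * (α * q) = q := by rw [← mul_assoc, hα, one_mul]
  have hp (q : Quat) : star qp * ((star qp)⁻¹ * q) = q := mul_inv_cancel_left₀ star_qp_ne_zero q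
  refine Prod.ext ?_ (Prod.ext rfl ?_)
  · funext s
    simp only [triangularMap, Tlz, rmulLam, Pi.add_apply, mul_assoc, hcancel]
  · simp only [triangularMap, Tlz, ipLeech_rmulLam_left, ipLeech_rmulLam_right, star_star,
      div_two_eq_smul, mul_add, mul_sub, sub_mul, mul_assoc, smul_mul_assoc, mul_smul_comm,
      hcancel, hp]
    abel

theorem commutator_triangularMap_Tlz :
    triangularMap α c (Tlz lam z v) =
      Tlz lam z (Tlz (rmulLam lam (star α - 1))
        (α * z * star α - z + Imq (ipLeech (rmulLam lam (star α)) (fun s => -lam s)))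
        (triangularMap α c v)) := by
  have hvec : lam + rmulLam lam (star α - 1) = rmulLam lam (star α) := by
    funext s
    simp only [rmulLam, Pi.add_apply, mul_sub, mul_one, add_sub_cancel]
  have hcentral :
      z + (α * z * star α - z + Imq (ipLeech (rmulLam lam (star α)) (fun s => -lam s))) +
        Imq (ipLeech (rmulLam lam (star α - 1)) lam) = α * z * star α := by
    simp only [Imq, ipLeech_neg_right, ipLeech_rmulLam_left, star_sub, star_star, star_one,
      star_neg, star_mul, star_ipLeech, sub_mul, one_mul, div_two_eq_smul]
    module
  rw [Tlz_Tlz, hvec, hcentral, triangularMap_Tlz lam z v hα]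

end Translations

section Roots

/-- The vector `(0; 1, -β)` of `H`. It is a root when `Re(p̄β) = 1`; both `r₂ = cellRoot 1` and
`r₃ = cellRoot ε` have this shape. -/
def cellRoot (β : Quat) : VL := (0, 1, -β)

theorem ipLL_cellRoot (β : Quat) (v : VL) :
    ipLL (cellRoot β) v = star qp * v.2.2 - star β * qp * v.2.1 := by
  simp only [ipLL, cellRoot, ipLeech_zero_left, zero_add, star_one, one_mul, star_neg, neg_mul,
    sub_eq_add_neg]

theorem ipLL_cellRoot_self {β : Quat} (hβ : (star qp * β).re = 1) :
    ipLL (cellRoot β) (cellRoot β) = -2 := by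
  have htrace : star qp * β + star β * qp = 2 := by
    simpa [hβ] using Quaternion.self_add_star (star qp * β)
  rw [ipLL_cellRoot, ← htrace]
  simp only [cellRoot, mul_neg, mul_one, neg_add, sub_eq_add_neg]

theorem reflL_cellRoot {β : Quat} (hβ : (star qp * β).re = 1) (ζ : Quat) (v : VL) :
    reflL (cellRoot β) ζ v = v +
      rmulL (cellRoot β) ((2⁻¹ : ℝ) • ((1 - ζ) * (star qp * v.2.2 - star β * qp * v.2.1))) := by
  have hneg (r : VL) (q : Quat) : rmulL r (-q) = -rmulL r q := by
    simp only [rmulL, mul_neg]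
    rfl
  rw [reflL, ipLL_cellRoot_self hβ, ipLL_cellRoot, div_neg, div_two_eq_smul, hneg, sub_neg_eq_add]

theorem star_eps_mul_eps : star eps * eps = 1 := by
  ext <;> norm_num

theorem Rf_eq_triangularMap : Rf = triangularMap eps (1 + (2⁻¹ : ℝ) • ((1 - qk) * qp)) := by
  have hr₂ : (star qp * 1).re = 1 := by simp [qp]
  have hr₃ : (star qp * eps).re = 1 := by norm_num [qp]
  funext ⟨m, μ, ν⟩
  change reflL (cellRoot eps) qi (reflL (cellRoot 1) qj (m, μ, ν)) = _
  simp only [reflL_cellRoot hr₂, reflL_cellRoot hr₃, triangularMap, inv_star_qp]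
  refine Prod.ext ?_ (Prod.ext ?_ ?_)
  · funext s
    simp [rmulL, cellRoot]
  · ext <;> simp [rmulL, cellRoot, qp] <;> ring
  · ext <;> simp [rmulL, cellRoot, qp] <;> ring

end Roots

theorem commutator_with_translation_general (lam : Fin 6 → Quat) (z : Quat) (v : VL) :
    Rf (Tlz lam z v) =
      Tlz lam z (Tlz (rmulLam lam (star eps - 1))
        (eps * z * star eps - z + Imq (ipLeech (rmulLam lam (star eps)) (fun s => -(lam s))))
        (Rf v)) := by
  rw [Rf_eq_triangularMap]
  exact commutator_triangularMap_Tlz lam z v star_eps_mul_eps _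

/-- For every `λ ∈ Λ` and purely imaginary `z`,
`T_{λ,z}⁻¹ ∘ R ∘ T_{λ,z} ∘ R⁻¹ = T_{λ(ε̄−1), εzε̄ − z + Im⟨λε̄, −λ⟩}`, stated
equivalently (avoiding inverses) as `R ∘ T_{λ,z} = T_{λ,z} ∘ T' ∘ R`. -/
theorem commutator_with_translation (lam : Fin 6 → Quat) (z : Quat)
    (hlam : memLeech lam) (hz : z.re = 0) :
    ∀ v : VL, Rf (Tlz lam z v) =
      Tlz lam z (Tlz (rmulLam lam (star eps - 1))
        (eps * z * star eps - z + Imq (ipLeech (rmulLam lam (star eps)) (fun s => -(lam s))))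
        (Rf v)) :=
  commutator_with_translation_general lam z
end
end

section
/- Let r = (l; 1, p̄⁻¹(1+β)) and r' = (l'; 1, p̄⁻¹(1+β')) be roots of L = Λ⊕H with β, β' purely imaginary quaternions. If ⟨l−l', l−l'⟩ = −4 and β − β' = Im⟨l,l'⟩, then the i-reflections φ_r^i and φ_{r'}^i commute. If ⟨l−l', l−l'⟩ = −6 and β − β' = Im⟨l,l'⟩ + i or β − β' = Im⟨l,l'⟩ − i, then φ_r^i and φ_{r'}^i braid, i.e. φ_r^i φ_{r'}^i φ_r^i = φ_{r'}^i φ_r^i φ_{r'}^i. -/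
/- Formalization over the ring ℋ of Hurwitz integers inside the real quaternions. -/

noncomputable section
open Quaternion Finset

/-!
A reflection is a map `x ↦ x + f x • v` for a linear form `f`. Two such maps, given by `(f, v)` and
`(g, w)`, commute if `f w = g v = 0`, and braid if `1 + f v + g v * f w = 0` together with the
same equation with `(f, v)` and `(g, w)` exchanged. For `i`-reflections in vectors `r`, `r'` of
norm `-2` with `a = ⟨r, r'⟩`, the first condition reads `a = 0` and the second follows if `|a|² = 2`
and `a` commutes with `i`, in particular if `a = 1 ± i`.

It remains to compute `a`. When `r` and `r'` both have middle coordinate `1`, that of `r - r'` is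
`0`, so `⟨l - l', l - l'⟩ = ⟨r - r', r - r'⟩ = -4 - 2 Re a`, while
`Im a = Im ⟨l, l'⟩ - Im (β - β')`.
-/

namespace QuatLeech

open Module MulOpposite LinearMap

section Transvection

variable {R V : Type*} [Semiring R] [AddCommMonoid V] [Module R V]
  {f g : Dual R V} {v w : V}

theorem transvection_comm (hfw : f w = 0) (hgv : g v = 0) (x : V) :
    transvection f v (transvection g w x) = transvection g w (transvection f v x) := by
  simp [transvection.apply, hfw, hgv, add_right_comm]

theorem transvection_comp_comp_apply (h : 1 + f v + g v * f w = 0) (x : V) :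
    transvection f v (transvection g w (transvection f v x)) =
      x + f x • v + g x • w + (f x * g v) • w + (g x * f w) • v := by
  have hv : f x • v + (f x * f v) • v + (f x * g v * f w) • v = 0 := by
    rw [← add_smul, ← add_smul, mul_assoc, ← mul_one_add, ← mul_add, h, mul_zero, zero_smul]
  calc transvection f v (transvection g w (transvection f v x))
    _ = x + f x • v + g x • w + (f x * g v) • w + (g x * f w) • v +
        (f x • v + (f x * f v) • v + (f x * g v * f w) • v) := by
      simp only [transvection.apply, map_add, map_smul, smul_add, mul_smul]
      abel
    _ = _ := by rw [hv, add_zero]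

theorem transvection_braid (hv : 1 + f v + g v * f w = 0) (hw : 1 + g w + f w * g v = 0) (x : V) :
    transvection f v (transvection g w (transvection f v x)) =
      transvection g w (transvection f v (transvection g w x)) := by
  rw [transvection_comp_comp_apply hv, transvection_comp_comp_apply hw]
  abel

end Transvection

@[simp] theorem re_qi : qi.re = 0 := rfl

@[simp] theorem imI_qi : qi.imI = 1 := rfl

@[simp] theorem imJ_qi : qi.imJ = 0 := rfl

@[simp] theorem imK_qi : qi.imK = 0 := rfl

theorem im_qi : qi.im = qi := by
  ext <;> simp

theorem qp_ne_zero : qp ≠ 0 :=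
  fun h ↦ by simpa [qp] using congrArg QuaternionAlgebra.re h

theorem Imq_eq_im (q : Quat) : Imq q = q.im := by
  have : CharZero Quat := charZero_of_injective_algebraMap (algebraMap ℝ Quat).injective
  have h : q - star q = q.im * 2 := by
    ext <;> simp [mul_two]
  rw [Imq, h, mul_div_cancel_right₀ _ two_ne_zero]

theorem star_ipLeech (x y : Fin 6 → Quat) : star (ipLeech x y) = ipLeech y x := by
  have hcomm : Commute (2 : Quat)⁻¹ (∑ s, star (y s) * x s) :=
    (Nat.cast_commute 2 _).inv_left₀
  simp only [ipLeech, star_mul, star_neg, star_sum, star_star, star_inv₀, star_ofNat]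
  exact hcomm.neg_left.eq.symm

theorem star_ipLL (x y : VL) : star (ipLL x y) = ipLL y x := by
  simp only [ipLL, star_add, star_mul, star_star, star_ipLeech, mul_assoc]
  abel

theorem ipLL_self_eq_re (r : VL) : ipLL r r = (ipLL r r).re :=
  star_eq_self.mp (star_ipLL r r)

theorem ipLeech_add_right (x y z : Fin 6 → Quat) :
    ipLeech x (y + z) = ipLeech x y + ipLeech x z := by
  simp [ipLeech, mul_add, Finset.sum_add_distrib]

theorem ipLL_add_right (x y z : VL) : ipLL x (y + z) = ipLL x y + ipLL x z := by
  simp only [ipLL, Prod.fst_add, Prod.snd_add, ipLeech_add_right, mul_add]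
  abel

theorem ipLL_sub_right (x y z : VL) : ipLL x (y - z) = ipLL x y - ipLL x z := by
  rw [eq_sub_iff_add_eq, ← ipLL_add_right, sub_add_cancel]

theorem ipLL_sub_left (x y z : VL) : ipLL (x - y) z = ipLL x z - ipLL y z := by
  rw [← star_ipLL, ipLL_sub_right, star_sub, star_ipLL, star_ipLL]

theorem re_ipLL_sub_self (x y : VL) :
    (ipLL (x - y) (x - y)).re = (ipLL x x).re + (ipLL y y).re - 2 * (ipLL x y).re := by
  have hsymm : (ipLL y x).re = (ipLL x y).re := by rw [← star_ipLL, re_star]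
  simp only [ipLL_sub_left, ipLL_sub_right, re_sub, hsymm]
  ring

theorem ipLL_rmulL_right (x y : VL) (q : Quat) : ipLL x (rmulL y q) = ipLL x y * q := by
  simp only [ipLL, rmulL, ipLeech, add_mul, mul_assoc, Finset.sum_mul]

theorem op_smul_eq_rmulL (q : Quat) (v : VL) : op q • v = rmulL v q := rfl

/-- The right-linear functional `v ↦ c⟨r, v⟩`. Right ℍ-modules are encoded as left modules over
the opposite ring, so its values lie in `Quatᵐᵒᵖ`. -/
def pairing (c : Quat) (r : VL) : Dual Quatᵐᵒᵖ VL where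
  toFun v := op (c * ipLL r v)
  map_add' x y := by rw [ipLL_add_right, mul_add, op_add]
  map_smul' q x := by
    rw [← op_unop q, op_smul_eq_rmulL, ipLL_rmulL_right, ← mul_assoc, op_mul]
    rfl

theorem pairing_apply (c : Quat) (r v : VL) : pairing c r v = op (c * ipLL r v) := rfl

theorem reflL_eq_transvection {r : VL} {n : ℝ} (hr : ipLL r r = n) (μ : Quat) (v : VL) :
    reflL r μ v = transvection (pairing (n⁻¹ • (μ - 1)) r) r v := by
  have hcoef : n⁻¹ • (μ - 1) * ipLL r v = -((1 - μ) * ipLL r v / ipLL r r) := by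
    rw [hr, div_eq_mul_inv, ← Quaternion.coe_inv, mul_coe_eq_smul, smul_mul_assoc, ← smul_neg,
      ← neg_mul, neg_sub]
  rw [transvection.apply, pairing_apply, hcoef, op_neg, neg_smul, ← sub_eq_add_neg,
    op_smul_eq_rmulL, reflL]

theorem reflL_comm {r r' : VL} (h : ipLL r r' = 0) (μ μ' : Quat) (v : VL) :
    reflL r μ (reflL r' μ' v) = reflL r' μ' (reflL r μ v) := by
  have h' : ipLL r' r = 0 := by rw [← star_ipLL, h, star_zero]
  simp only [reflL_eq_transvection (ipLL_self_eq_re _)]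
  apply transvection_comm <;> simp [pairing_apply, h, h']

theorem one_add_pairing_add_mul_eq_zero {r r' : VL} {n : ℝ} {μ : Quat} (hr : ipLL r r = n)
    (hn : n ≠ 0) (hcomm : Commute (ipLL r r') μ)
    (hμ : normSq (ipLL r r') • (μ - 1) ^ 2 = -(n ^ 2 • μ)) :
    1 + pairing (n⁻¹ • (μ - 1)) r r +
      pairing (n⁻¹ • (μ - 1)) r' r * pairing (n⁻¹ • (μ - 1)) r r' = 0 := by
  have hself : n⁻¹ • (μ - 1) * ipLL r r = μ - 1 := by
    rw [hr, mul_coe_eq_smul, smul_inv_smul₀ hn]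
  -- With `c = n⁻¹ (μ - 1)` and `a = ⟨r, r'⟩`, commutation gives `c a c ā = |a|² c²`.
  have hcross : (n⁻¹ • (μ - 1) * ipLL r r') * (n⁻¹ • (μ - 1) * ipLL r' r) = -μ := by
    calc (n⁻¹ • (μ - 1) * ipLL r r') * (n⁻¹ • (μ - 1) * ipLL r' r)
      _ = n⁻¹ • (μ - 1) * (ipLL r r' * (n⁻¹ • (μ - 1))) * ipLL r' r := by simp only [mul_assoc]
      _ = n⁻¹ • (μ - 1) * (n⁻¹ • (μ - 1)) * (ipLL r r' * star (ipLL r r')) := by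
        rw [((hcomm.sub_right (.one_right _)).smul_right n⁻¹).eq, star_ipLL]
        simp only [mul_assoc]
      _ = (n ^ 2)⁻¹ • (normSq (ipLL r r') • (μ - 1) ^ 2) := by
        rw [self_mul_star, mul_coe_eq_smul, smul_mul_smul_comm, smul_comm, ← sq, ← sq, inv_pow]
      _ = -μ := by rw [hμ, smul_neg, inv_smul_smul₀ (pow_ne_zero 2 hn)]
  simp only [pairing_apply, ← op_mul, hself, hcross, op_sub, op_one, op_neg]
  abel

theorem reflL_braid {r r' : VL} {n : ℝ} {μ : Quat} (hr : ipLL r r = n) (hr' : ipLL r' r' = n)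
    (hn : n ≠ 0) (hcomm : Commute (ipLL r r') μ)
    (hμ : normSq (ipLL r r') • (μ - 1) ^ 2 = -(n ^ 2 • μ)) (v : VL) :
    reflL r μ (reflL r' μ (reflL r μ v)) = reflL r' μ (reflL r μ (reflL r' μ v)) := by
  have hcomm' : Commute (ipLL r' r) μ := by
    rw [← star_ipLL, star_eq_two_re_sub]
    exact Commute.sub_left (coe_commutes _ _) hcomm
  have hμ' : normSq (ipLL r' r) • (μ - 1) ^ 2 = -(n ^ 2 • μ) := by
    rwa [← star_ipLL, normSq_star]
  simp only [reflL_eq_transvection hr, reflL_eq_transvection hr']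
  exact transvection_braid (one_add_pairing_add_mul_eq_zero hr hn hcomm hμ)
    (one_add_pairing_add_mul_eq_zero hr' hn hcomm' hμ') v

theorem reflL_qi_braid {r r' : VL} (hr : ipLL r r = -2) (hr' : ipLL r' r' = -2)
    (h : ipLL r r' = 1 - qi ∨ ipLL r r' = 1 + qi) (v : VL) :
    reflL r qi (reflL r' qi (reflL r qi v)) = reflL r' qi (reflL r qi (reflL r' qi v)) := by
  have hn : ((-2 : ℝ) : Quat) = -2 := by norm_cast
  have hcomm : Commute (ipLL r r') qi := by
    rcases h with h | h <;> rw [h]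
    exacts [(Commute.one_left _).sub_left (.refl _), (Commute.one_left _).add_left (.refl _)]
  have hnorm : normSq (ipLL r r') = 2 := by
    rcases h with h | h <;> rw [h] <;> norm_num [normSq_def']
  refine reflL_braid (hr.trans hn.symm) (hr'.trans hn.symm) (by norm_num) hcomm ?_ v
  rw [hnorm]
  ext <;> norm_num [sq]

theorem ipLL_sub_self_of_height_eq {r r' : VL} (h : r.2.1 = r'.2.1) :
    ipLL (r - r') (r - r') = ipLeech (r.1 - r'.1) (r.1 - r'.1) := by
  simp [ipLL, h]

theorem re_ipLL_of_height_eq {r r' : VL} (h : r.2.1 = r'.2.1) :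
    (ipLL r r').re =
      ((ipLL r r).re + (ipLL r' r').re - (ipLeech (r.1 - r'.1) (r.1 - r'.1)).re) / 2 := by
  rw [← ipLL_sub_self_of_height_eq h, re_ipLL_sub_self]
  ring

/-- The vector `(l; 1, p̄⁻¹(1+β))`. Every vector with middle coordinate `1` has this form for a
unique quaternion `β`. -/
def heightOne (l : Fin 6 → Quat) (β : Quat) : VL := (l, 1, (star qp)⁻¹ * (1 + β))

theorem ipLL_heightOne (l l' : Fin 6 → Quat) (β β' : Quat) :
    ipLL (heightOne l β) (heightOne l' β') = ipLeech l l' + (1 + β') + star (1 + β) := by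
  have hp : star qp ≠ 0 := star_ne_zero.mpr qp_ne_zero
  simp only [ipLL, heightOne, star_one, one_mul, mul_one, star_mul, star_inv₀, star_star,
    mul_inv_cancel_left₀ hp, inv_mul_cancel_right₀ qp_ne_zero]

theorem im_ipLL_heightOne (l l' : Fin 6 → Quat) (β β' : Quat) :
    (ipLL (heightOne l β) (heightOne l' β')).im = (ipLeech l l').im - (β - β').im := by
  simp only [ipLL_heightOne, im_add, im_sub, im_star, im_one]
  abel

theorem ipLL_heightOne_of_norm_eq {l l' : Fin 6 → Quat} {β β' t : Quat} {N : ℝ}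
    (hr : ipLL (heightOne l β) (heightOne l β) = -2)
    (hr' : ipLL (heightOne l' β') (heightOne l' β') = -2)
    (hN : ipLeech (l - l') (l - l') = N) (ht : β - β' = Imq (ipLeech l l') + t) :
    ipLL (heightOne l β) (heightOne l' β') = (-2 - N / 2 : ℝ) - t.im := by
  have htwo : (-2 : Quat).re = -2 := mod_cast re_intCast (-2)
  have hre : (ipLL (heightOne l β) (heightOne l' β')).re = -2 - N / 2 := by
    have hheight : (heightOne l β).2.1 = (heightOne l' β').2.1 := rfl
    rw [re_ipLL_of_height_eq hheight, hr, hr', htwo, heightOne, heightOne, hN, re_coe]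
    ring
  have him : (ipLL (heightOne l β) (heightOne l' β')).im = -t.im := by
    rw [im_ipLL_heightOne, ht, Imq_eq_im, im_add, im_idem, sub_add_cancel_left]
  rw [← re_add_im (ipLL _ _), hre, him, ← sub_eq_add_neg]

end QuatLeech

open QuatLeech in
theorem commuting_and_braiding_conditions_general (l l' : Fin 6 → Quat) (β β' : Quat) (r r' : VL)
    (hrdef : r = heightOne l β) (hr'def : r' = heightOne l' β')
    (hr : ipLL r r = -2) (hr' : ipLL r' r' = -2) :
    ((ipLeech (l - l') (l - l') = -4 ∧ β - β' = Imq (ipLeech l l')) →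
      ∀ v, reflL r qi (reflL r' qi v) = reflL r' qi (reflL r qi v)) ∧
    ((ipLeech (l - l') (l - l') = -6 ∧
        (β - β' = Imq (ipLeech l l') + qi ∨ β - β' = Imq (ipLeech l l') - qi)) →
      ∀ v, reflL r qi (reflL r' qi (reflL r qi v))
          = reflL r' qi (reflL r qi (reflL r' qi v))) := by
  subst hrdef hr'def
  constructor
  · rintro ⟨hN, hβ⟩
    have hN' : ipLeech (l - l') (l - l') = (-4 : ℝ) := by rw [hN]; norm_cast
    have hzero : (-2 - -4 / 2 : ℝ) = 0 := by norm_num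
    refine reflL_comm ?_ qi qi
    simpa [hzero] using ipLL_heightOne_of_norm_eq hr hr' hN' (hβ.trans (add_zero _).symm)
  · rintro ⟨hN, hβ⟩
    have hN' : ipLeech (l - l') (l - l') = (-6 : ℝ) := by rw [hN]; norm_cast
    have hone : (-2 - -6 / 2 : ℝ) = 1 := by norm_num
    refine reflL_qi_braid hr hr' (hβ.imp (fun hβ ↦ ?_) fun hβ ↦ ?_)
    · simpa [hone, im_qi] using ipLL_heightOne_of_norm_eq hr hr' hN' hβ
    · simpa [hone, im_qi] using
        ipLL_heightOne_of_norm_eq hr hr' hN' (hβ.trans (sub_eq_add_neg _ _))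

/-- Let `r = (l; 1, p̄⁻¹(1+β))` and `r' = (l'; 1, p̄⁻¹(1+β'))` be roots
of `L = Λ ⊕ H` with `β, β'` purely imaginary.  If `⟨l−l',l−l'⟩ = −4` and
`β − β' = Im⟨l,l'⟩` then `φ_r^i` and `φ_{r'}^i` commute; if `⟨l−l',l−l'⟩ = −6` and
`β − β' = Im⟨l,l'⟩ ± i` then `φ_r^i` and `φ_{r'}^i` braid. -/
theorem commuting_and_braiding_conditions (l l' : Fin 6 → Quat) (β β' : Quat)
    (hβ : β.re = 0) (hβ' : β'.re = 0) (r r' : VL)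
    (hrdef : r = (l, 1, (star qp)⁻¹ * (1 + β)))
    (hr'def : r' = (l', 1, (star qp)⁻¹ * (1 + β')))
    (hr : memLL r ∧ ipLL r r = -2) (hr' : memLL r' ∧ ipLL r' r' = -2) :
    ((ipLeech (l - l') (l - l') = -4 ∧ β - β' = Imq (ipLeech l l')) →
      ∀ v, reflL r qi (reflL r' qi v) = reflL r' qi (reflL r qi v)) ∧
    ((ipLeech (l - l') (l - l') = -6 ∧
        (β - β' = Imq (ipLeech l l') + qi ∨ β - β' = Imq (ipLeech l l') - qi)) →
      ∀ v, reflL r qi (reflL r' qi (reflL r qi v))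
          = reflL r' qi (reflL r qi (reflL r' qi v))) :=
  commuting_and_braiding_conditions_general l l' β β' r r' hrdef hr'def hr.2 hr'.2
end
end
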